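/- arXiv:1905.02288 — 2 statements merged into one kernel-verified Lean document; each statement's English description precedes it below -/
import Mathlib

section
/- Let f, g ∈ ℂ[X,Y] be quasi-convenient polynomials of positive degree. Then ν∞(f,g) = Area(Δ∞(fg)) − Area(Δ∞(f)) − Area(Δ∞(g)) = 0 if and only if both Δ∞(f) and Δ∞(g) are segments contained in one and the same straight line through the origin. -/
open MvPolynomial MeasureTheory Pointwise

noncomputable section

/-- Polynomials in two complex variables. -/
abbrev P2 := MvPolynomial (Fin 2) ℂ

/-- The `w`-weight of a monomial exponent. -/
def wt (w : ℝ × ℝ) (m : Fin 2 →₀ ℕ) : ℝ := w.1 * (m 0 : ℝ) + w.2 * (m 1 : ℝ)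

/-- `d_w(f)`: maximal `w`-weight of a monomial of `f`. -/
def dw (w : ℝ × ℝ) (f : P2) : ℝ := sSup (wt w '' (f.support : Set (Fin 2 →₀ ℕ)))

open Classical in
/-- The initial form `init(f, w)`: sum of the monomials of `f` of maximal `w`-weight. -/
def initForm (w : ℝ × ℝ) (f : P2) : P2 :=
  ∑ m ∈ f.support, if wt w m = dw w f then monomial m (f.coeff m) else 0

/-- `f` is quasi-convenient: some pure power of `X` and some pure power of `Y`
occur in `f` with nonzero coefficient. -/
def QuasiConvenient (f : P2) : Prop :=
  (∃ a : ℕ, f.coeff (Finsupp.single 0 a) ≠ 0) ∧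
  (∃ b : ℕ, f.coeff (Finsupp.single 1 b) ≠ 0)

/-- The Newton diagram at infinity `Δ∞(f)`. -/
def newton (f : P2) : Set (ℝ × ℝ) :=
  convexHull ℝ ({(0, 0)} ∪ {p : ℝ × ℝ | ∃ m ∈ f.support, p = ((m 0 : ℝ), (m 1 : ℝ))})

/-- Area (2-dimensional Lebesgue measure) of a plane set. -/
def area (S : Set (ℝ × ℝ)) : ℝ := (volume S).toReal

/-- `ν∞(f, g)`. -/
def nuInf (f g : P2) : ℝ := area (newton (f * g)) - area (newton f) - area (newton g)

/-- `f` is nondegenerate at infinity. -/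
def NondegAtInf (f : P2) : Prop :=
  ∀ w : ℝ × ℝ, (0 < w.1 ∨ 0 < w.2) →
    ¬ ∃ x y : ℂ, x ≠ 0 ∧ y ≠ 0 ∧
      eval ![x, y] (initForm w f) = 0 ∧
      eval ![x, y] (pderiv 0 (initForm w f)) = 0 ∧
      eval ![x, y] (pderiv 1 (initForm w f)) = 0

/-- The pair `(f, g)` is nondegenerate at infinity. -/
def PairNondegAtInf (f g : P2) : Prop :=
  ∀ w : ℝ × ℝ, (0 < w.1 ∨ 0 < w.2) →
    ¬ ∃ x y : ℂ, x ≠ 0 ∧ y ≠ 0 ∧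
      eval ![x, y] (initForm w f) = 0 ∧ eval ![x, y] (initForm w g) = 0

/-- `g` and `h` have no common nonunit factor. -/
def CoprimeDiv (g h : P2) : Prop := ∀ d : P2, d ∣ g → d ∣ h → IsUnit d

/-- `f` is nearly irreducible: positive degree, and any two nonconstant factors
have a common zero in `ℂ²`. -/
def NearlyIrreducible (f : P2) : Prop :=
  0 < f.totalDegree ∧
  ∀ g h : P2, g ∣ f → h ∣ f → 0 < g.totalDegree → 0 < h.totalDegree →
    ∃ x y : ℂ, eval ![x, y] g = 0 ∧ eval ![x, y] h = 0

/-- The maximal ideal of polynomials vanishing at a point `P ∈ ℂ²`. -/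
def mIdeal (Pt : ℂ × ℂ) : Ideal P2 := RingHom.ker (eval ![Pt.1, Pt.2] : P2 →+* ℂ)

instance (Pt : ℂ × ℂ) : (mIdeal Pt).IsPrime := RingHom.ker_isPrime _

/-- Intersection multiplicity `(f, g)_P`: the `ℂ`-dimension of the quotient of the
local ring of `ℂ²` at `P` by the ideal generated by `f` and `g`. -/
def interMult (f g : P2) (Pt : ℂ × ℂ) : ℕ :=
  Module.finrank ℂ
    (Localization.AtPrime (mIdeal Pt) ⧸
      Ideal.span {algebraMap P2 (Localization.AtPrime (mIdeal Pt)) f,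
                  algebraMap P2 (Localization.AtPrime (mIdeal Pt)) g})

/-
Let `A` and `B` be compact convex sets in the plane and choose `a ∈ A`, `b ∈ B` at maximal
Euclidean distance. By strict convexity of the norm the translates `b + A` and `a + B`, both
contained in `A + B`, meet in the single point `a + b`, so `Area A + Area B ≤ Area (A + B)`. If
equality holds and `A + B` has interior points, the two translates cover `A + B`; as removing a
point does not disconnect `A + B`, one of them is all of `A + B`, and the other summand is a point.
Hence, for `A` and `B` with more than one point, equality means exactly that `A + B` lies on a line.

By Ostrowski's theorem the convex hull of the support of a product is the sum of the hulls. Adding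
the origin to the hulls can destroy this, but not for quasi-convenient polynomials: every ray from
the origin into the closed quadrant meets the hull of the support of each factor.
-/

section Convex

variable {E : Type*} [AddCommGroup E] [Module ℝ E] {C : Set E}

theorem exists_notMem_line_of_not_collinear {x : E} (hx : x ∈ C) (hcol : ¬ Collinear ℝ C) (y : E) :
    ∃ z ∈ C, z ∉ line[ℝ, x, y] := by
  by_contra! hline
  refine hcol ((collinear_iff_of_mem hx).2 ⟨y - x, fun z hz ↦ ?_⟩)
  obtain ⟨r, rfl⟩ := mem_affineSpan_pair_iff_exists_lineMap_eq.1 (hline z hz)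
  exact ⟨r, AffineMap.lineMap_apply x y r⟩

theorem notMem_segment_of_notMem_line {p x y z : E} (hp : p ∈ line[ℝ, x, y]) (hpx : p ≠ x)
    (hz : z ∉ line[ℝ, x, y]) : p ∉ segment ℝ x z := by
  intro hpxz
  have hxz : z ∈ line[ℝ, x, p] :=
    (mem_segment_iff_wbtw.1 hpxz).right_mem_affineSpan_of_left_ne hpx.symm
  exact hz (affineSpan_pair_le_of_mem_of_mem
    (left_mem_affineSpan_pair ℝ x y) hp hxz)

section Topology

variable [TopologicalSpace E] [IsTopologicalAddGroup E] [ContinuousSMul ℝ E]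

theorem isPreconnected_sdiff_singleton_of_convex (hC : Convex ℝ C) (hcol : ¬ Collinear ℝ C)
    (p : E) : IsPreconnected (C \ {p}) := by
  have isPreconnected_segment (x y : E) : IsPreconnected (segment ℝ x y) :=
    (convex_segment x y).isPreconnected
  refine isPreconnected_of_forall_pair fun x ⟨hx, hxp⟩ y ⟨hy, hyp⟩ ↦ ?_
  by_cases hp : p ∈ segment ℝ x y
  · have hpline : p ∈ line[ℝ, x, y] := (mem_segment_iff_wbtw.1 hp).mem_affineSpan
    obtain ⟨z, hz, hzline⟩ := exists_notMem_line_of_not_collinear hx hcol y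
    have hpxz : p ∉ segment ℝ x z := notMem_segment_of_notMem_line hpline (Ne.symm hxp) hzline
    have hpyz : p ∉ segment ℝ y z := by
      rw [Set.pair_comm] at hpline hzline
      exact notMem_segment_of_notMem_line hpline (Ne.symm hyp) hzline
    refine ⟨segment ℝ x z ∪ segment ℝ y z, ?_, .inl (left_mem_segment ℝ x z),
      .inr (left_mem_segment ℝ y z), (isPreconnected_segment x z).union z
        (right_mem_segment ℝ x z) (right_mem_segment ℝ y z) (isPreconnected_segment y z)⟩
    exact Set.union_subset
      (Set.subset_sdiff_singleton (hC.segment_subset hx hz) hpxz)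
      (Set.subset_sdiff_singleton (hC.segment_subset hy hz) hpyz)
  · exact ⟨segment ℝ x y, Set.subset_sdiff_singleton (hC.segment_subset hx hy) hp,
      left_mem_segment ℝ x y, right_mem_segment ℝ x y, isPreconnected_segment x y⟩

theorem subset_or_subset_of_convex_of_inter_eq_singleton (hC : Convex ℝ C)
    (hcol : ¬ Collinear ℝ C) {K L : Set E} (hK : IsClosed K) (hL : IsClosed L)
    (hCKL : C ⊆ K ∪ L) {p : E} (hKL : K ∩ L = {p}) : C ⊆ K ∨ C ⊆ L := by
  have hp : p ∈ K ∩ L := hKL ▸ Set.mem_singleton p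
  by_contra! ⟨hCK, hCL⟩
  obtain ⟨x, hx, hxK⟩ := Set.not_subset.1 hCK
  obtain ⟨y, hy, hyL⟩ := Set.not_subset.1 hCL
  have hxp : x ≠ p := fun h ↦ hxK (h ▸ hp.1)
  have hyp : y ≠ p := fun h ↦ hyL (h ▸ hp.2)
  obtain ⟨q, ⟨-, hqp⟩, hq⟩ := isPreconnected_closed_iff.1
    (isPreconnected_sdiff_singleton_of_convex hC hcol p) K L hK hL
    (Set.sdiff_subset.trans hCKL) ⟨y, ⟨hy, hyp⟩, (hCKL hy).resolve_right hyL⟩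
    ⟨x, ⟨hx, hxp⟩, (hCKL hx).resolve_left hxK⟩
  exact hqp (hKL ▸ hq)

theorem subset_of_measure_sdiff_eq_zero_of_convex [MeasurableSpace E] {μ : Measure E}
    [μ.IsOpenPosMeasure] (hC : Convex ℝ C) (hint : (interior C).Nonempty) {K : Set E}
    (hK : IsClosed K) (hμ : μ (C \ K) = 0) : C ⊆ K := by
  have hempty : interior C \ K = ∅ := (isOpen_interior.sdiff hK).measure_eq_zero_iff μ |>.1
    (measure_mono_null (Set.sdiff_subset_sdiff_left interior_subset) hμ)
  calc C ⊆ closure C := subset_closure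
    _ = closure (interior C) := (hC.closure_interior_eq_closure_of_nonempty_interior hint).symm
    _ ⊆ K := closure_minimal (Set.sdiff_eq_empty.1 hempty) hK

theorem exists_vadd_inter_vadd_eq_singleton [T2Space E] [FiniteDimensional ℝ E] {A B : Set E}
    (hA : IsCompact A) (hB : IsCompact B) (hA₀ : A.Nonempty) (hB₀ : B.Nonempty) :
    ∃ a ∈ A, ∃ b ∈ B, (b +ᵥ A) ∩ (a +ᵥ B) = {a + b} := by
  have hcont : Continuous fun q : E × E ↦ ‖toEuclidean (q.1 - q.2)‖ :=
    (toEuclidean.continuous.comp (continuous_fst.sub continuous_snd)).norm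
  obtain ⟨⟨a, b⟩, ⟨ha, hb⟩, hmax⟩ :=
    (hA.prod hB).exists_isMaxOn (hA₀.prod hB₀) hcont.continuousOn
  refine ⟨a, ha, b, hb, Set.Subset.antisymm ?_ ?_⟩
  · rintro _ ⟨⟨a', ha', rfl⟩, b', hb', hab : a + b' = b + a'⟩
    have hmid : (1 / 2 : ℝ) • (a' - b) + (1 / 2 : ℝ) • (a - b') = a - b := by
      rw [eq_sub_of_add_eq' hab]; module
    have heq : a' - b = a - b' := by
      by_contra hne
      have hlt := norm_combo_lt_of_ne (hmax (Set.mk_mem_prod ha' hb))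
        (hmax (Set.mk_mem_prod ha hb')) (toEuclidean.injective.ne hne)
        one_half_pos one_half_pos (add_halves 1)
      rw [← map_smul, ← map_smul, ← map_add, hmid] at hlt
      exact lt_irrefl _ hlt
    have haa : a' = a := by
      rw [← heq, ← add_smul, add_halves, one_smul] at hmid
      exact sub_left_injective hmid
    exact haa ▸ add_comm b a'
  · rintro _ rfl
    exact ⟨⟨a, ha, add_comm b a⟩, b, hb, rfl⟩

theorem eq_of_forall_add_mem_vadd [T1Space E] [LocallyConvexSpace ℝ E] {A : Set E}
    (hA : IsCompact A) (hA₀ : A.Nonempty) {b b' : E} (h : ∀ a ∈ A, a + b' ∈ b +ᵥ A) : b' = b := by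
  by_contra hne
  obtain ⟨f, hf⟩ := geometric_hahn_banach_point_point (Ne.symm hne)
  obtain ⟨a, ha, hmax⟩ := hA.exists_isMaxOn hA₀ f.continuous.continuousOn
  obtain ⟨a', ha', hab⟩ := Set.mem_vadd_set.1 (h a ha)
  rw [vadd_eq_add] at hab
  have hle : f a' ≤ f a := hmax ha'
  have heq : f b + f a' = f a + f b' := by rw [← map_add, hab, map_add]
  linarith

theorem exists_eq_segment_smul_of_subset_range_smul [T2Space E] (hC : IsCompact C)
    (hCc : Convex ℝ C) (hC₀ : C.Nonempty) {v : E} (hv : C ⊆ Set.range fun r : ℝ ↦ r • v) :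
    ∃ a b : ℝ, C = segment ℝ (a • v) (b • v) := by
  obtain rfl | hv₀ := eq_or_ne v 0
  · refine ⟨0, 0, ?_⟩
    rw [smul_zero, segment_same]
    refine hC₀.subset_singleton_iff.1 (hv.trans ?_)
    rintro _ ⟨r, rfl⟩
    exact smul_zero r
  · let L : ℝ →ₗ[ℝ] E := LinearMap.toSpanSingleton ℝ E v
    have hT : IsCompact (L ⁻¹' C) := (isClosedEmbedding_smul_left hv₀).isCompact_preimage hC
    have hT₀ : (L ⁻¹' C).Nonempty := hC₀.preimage' hv
    have hIcc := eq_Icc_of_connected_compact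
      ⟨hT₀, (hCc.linear_preimage L).isPreconnected⟩ hT
    refine ⟨sInf (L ⁻¹' C), sSup (L ⁻¹' C), ?_⟩
    calc C = L '' (L ⁻¹' C) := (Set.image_preimage_eq_of_subset hv).symm
      _ = L '' segment ℝ (sInf (L ⁻¹' C)) (sSup (L ⁻¹' C)) := by
        rw [segment_eq_Icc (Real.sInf_le_sSup _ hT.bddBelow hT.bddAbove), ← hIcc]
      _ = _ := image_segment ℝ L.toAffineMap _ _

theorem collinear_add_iff_exists_segment [T2Space E] {A B : Set E} (hA : IsCompact A)
    (hB : IsCompact B) (hAc : Convex ℝ A) (hBc : Convex ℝ B) (hA₀ : 0 ∈ A) (hB₀ : 0 ∈ B) :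
    Collinear ℝ (A + B) ↔ ∃ v : E, ∃ a b c d : ℝ,
      A = segment ℝ (a • v) (b • v) ∧ B = segment ℝ (c • v) (d • v) := by
  rw [collinear_iff_of_mem (Set.mem_add.2 ⟨0, hA₀, 0, hB₀, add_zero 0⟩)]
  refine exists_congr fun v ↦ ⟨fun h ↦ ?_, ?_⟩
  · have hrange : A + B ⊆ Set.range fun r : ℝ ↦ r • v := fun p hp ↦ by
      obtain ⟨r, rfl⟩ := h p hp
      exact ⟨r, (add_zero (r • v)).symm⟩
    obtain ⟨a, b, hab⟩ := exists_eq_segment_smul_of_subset_range_smul hA hAc ⟨0, hA₀⟩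
      ((Set.subset_add_left A hB₀).trans hrange)
    obtain ⟨c, d, hcd⟩ := exists_eq_segment_smul_of_subset_range_smul hB hBc ⟨0, hB₀⟩
      ((Set.subset_add_right B hA₀).trans hrange)
    exact ⟨a, b, c, d, hab, hcd⟩
  · rintro ⟨a, b, c, d, rfl, rfl⟩ _ ⟨_, ⟨s, t, -, -, -, rfl⟩, _, ⟨s', t', -, -, -, rfl⟩, rfl⟩
    refine ⟨s * a + t * b + (s' * c + t' * d), ?_⟩
    rw [vadd_eq_add, add_zero]
    module

end Topology

end Convex

section FiniteDimensional

open Module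

variable {E : Type*} [NormedAddCommGroup E] [NormedSpace ℝ E] [FiniteDimensional ℝ E]
  {A B C : Set E}

theorem interior_nonempty_iff_not_collinear_of_finrank_eq_two (hE : finrank ℝ E = 2)
    (hC : Convex ℝ C) (hC₀ : C.Nonempty) : (interior C).Nonempty ↔ ¬ Collinear ℝ C := by
  rw [hC.interior_nonempty_iff_affineSpan_eq_top,
    AffineSubspace.affineSpan_eq_top_iff_vectorSpan_eq_top_of_nonempty ℝ E E hC₀,
    collinear_iff_finrank_le_one, not_le]
  refine ⟨fun h ↦ by rw [h, finrank_top, hE]; exact one_lt_two, fun h ↦ ?_⟩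
  exact Submodule.eq_top_of_finrank_eq (le_antisymm (Submodule.finrank_le _) (hE ▸ h))

variable [MeasurableSpace E] [BorelSpace E]

theorem measure_add_measure_lt_measure_add (μ : Measure E) [μ.IsAddHaarMeasure]
    (hA : IsCompact A) (hB : IsCompact B) (hAB : Convex ℝ (A + B)) (hA₁ : A.Nontrivial)
    (hB₁ : B.Nontrivial) (hint : (interior (A + B)).Nonempty) (hcol : ¬ Collinear ℝ (A + B)) :
    μ A + μ B < μ (A + B) := by
  by_contra! hle
  have : Nontrivial E := Set.nontrivial_of_nontrivial hA₁
  obtain ⟨a, ha, b, hb, hinter⟩ :=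
    exists_vadd_inter_vadd_eq_singleton hA hB hA₁.nonempty hB₁.nonempty
  have hK : IsClosed (b +ᵥ A) := (hA.vadd b).isClosed
  have hL : IsClosed (a +ᵥ B) := (hB.vadd a).isClosed
  have hsub : (b +ᵥ A) ∪ (a +ᵥ B) ⊆ A + B :=
    Set.union_subset (add_comm A B ▸ Set.vadd_set_subset_add hb) (Set.vadd_set_subset_add ha)
  have hμ : μ ((b +ᵥ A) ∪ (a +ᵥ B)) = μ A + μ B := by
    have hunion := measure_union_add_inter (μ := μ) (b +ᵥ A) hL.measurableSet
    rwa [hinter, measure_singleton, add_zero, measure_vadd, measure_vadd] at hunion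
  have hcover : A + B ⊆ (b +ᵥ A) ∪ (a +ᵥ B) := by
    refine subset_of_measure_sdiff_eq_zero_of_convex (μ := μ) hAB hint (hK.union hL) ?_
    have hfin : μ ((b +ᵥ A) ∪ (a +ᵥ B)) ≠ ⊤ := ((hA.vadd b).union (hB.vadd a)).measure_ne_top
    rw [measure_sdiff hsub (hK.union hL).nullMeasurableSet hfin, hμ]
    exact tsub_eq_zero_of_le hle
  obtain hsubA | hsubB :=
    subset_or_subset_of_convex_of_inter_eq_singleton hAB hcol hK hL hcover hinter
  · refine Set.not_subsingleton_iff.2 hB₁ (Set.subsingleton_of_forall_eq b fun b' hb' ↦ ?_)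
    exact eq_of_forall_add_mem_vadd hA hA₁.nonempty fun a ha ↦ hsubA (Set.add_mem_add ha hb')
  · refine Set.not_subsingleton_iff.2 hA₁ (Set.subsingleton_of_forall_eq a fun a' ha' ↦ ?_)
    refine eq_of_forall_add_mem_vadd hB hB₁.nonempty fun b hb ↦ hsubB ?_
    exact add_comm a' b ▸ Set.add_mem_add ha' hb

theorem measure_eq_zero_of_collinear_of_one_lt_finrank (hE : 1 < finrank ℝ E) (μ : Measure E)
    [μ.IsAddHaarMeasure] (hC : Collinear ℝ C) : μ C = 0 := by
  refine measure_mono_null (subset_affineSpan ℝ C) (μ.addHaar_affineSubspace _ fun htop ↦ ?_)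
  have hrank := collinear_iff_finrank_le_one.1 hC
  rw [AffineSubspace.vectorSpan_eq_top_of_affineSpan_eq_top ℝ E E htop, finrank_top] at hrank
  exact hrank.not_gt hE

theorem measure_add_eq_iff_collinear (hE : finrank ℝ E = 2) (μ : Measure E)
    [μ.IsAddHaarMeasure] (hA : IsCompact A) (hB : IsCompact B) (hAc : Convex ℝ A)
    (hBc : Convex ℝ B) (hA₁ : A.Nontrivial) (hB₁ : B.Nontrivial) :
    μ (A + B) = μ A + μ B ↔ Collinear ℝ (A + B) := by
  obtain ⟨a, ha⟩ := hA₁.nonempty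
  obtain ⟨b, hb⟩ := hB₁.nonempty
  constructor
  · contrapose!
    intro hcol
    have hint := (interior_nonempty_iff_not_collinear_of_finrank_eq_two hE (hAc.add hBc)
      (Set.Nonempty.add ⟨a, ha⟩ ⟨b, hb⟩)).2 hcol
    exact (measure_add_measure_lt_measure_add μ hA hB (hAc.add hBc) hA₁ hB₁ hint hcol).ne'
  · intro hcol
    have hsum : μ (A + B) = 0 :=
      measure_eq_zero_of_collinear_of_one_lt_finrank (hE ▸ one_lt_two) μ hcol
    have hA₀ : μ A = 0 := by
      rw [← measure_vadd μ b A]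
      exact measure_mono_null (add_comm A B ▸ Set.vadd_set_subset_add hb) hsum
    have hB₀ : μ B = 0 := by
      rw [← measure_vadd μ a B]
      exact measure_mono_null (Set.vadd_set_subset_add ha) hsum
    rw [hsum, hA₀, hB₀, add_zero]

end FiniteDimensional

section Ostrowski

theorem eq_and_eq_of_add_mem_extremePoints {E : Type*} [AddCommGroup E] [Module ℝ E]
    {A B : Set E} {a a' b b' : E} (ha : a ∈ A) (hb : b ∈ B) (ha' : a' ∈ A) (hb' : b' ∈ B)
    (hext : a + b ∈ (A + B).extremePoints ℝ) (h : a' + b' = a + b) : a' = a ∧ b' = b := by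
  have hmem : a + b ∈ openSegment ℝ (a' + b) (a + b') := by
    refine ⟨1 / 2, 1 / 2, one_half_pos, one_half_pos, add_halves 1, ?_⟩
    rw [← smul_add, add_add_add_comm, add_comm b b', ← add_add_add_comm, h]
    module
  have haa : a' = a :=
    add_right_cancel (hext.2 (Set.add_mem_add ha' hb) (Set.add_mem_add ha hb') hmem)
  exact ⟨haa, add_left_cancel (haa ▸ h)⟩

theorem uniqueAdd_of_add_mem_extremePoints {M E : Type*} [Add M] [AddCommGroup E] [Module ℝ E]
    {φ : M →ₙ+ E} (hφ : Function.Injective φ) {S T : Finset M} {m n : M} (hm : m ∈ S) (hn : n ∈ T)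
    (hext : φ m + φ n ∈ (convexHull ℝ (φ '' S + φ '' T)).extremePoints ℝ) :
    UniqueAdd S T m n := by
  have hmem {U : Finset M} {k : M} (hk : k ∈ U) : φ k ∈ convexHull ℝ (φ '' U) :=
    subset_convexHull ℝ _ (Set.mem_image_of_mem φ hk)
  rw [convexHull_add] at hext
  intro m' n' hm' hn' hadd
  refine And.imp (@hφ _ _) (@hφ _ _) (eq_and_eq_of_add_mem_extremePoints (hmem hm) (hmem hn)
    (hmem hm') (hmem hn') hext ?_)
  rw [← map_add, hadd, map_add]

theorem convexHull_image_support_mul {R M E : Type*} [Semiring R] [NoZeroDivisors R] [Add M]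
    [AddCommGroup E] [Module ℝ E] [TopologicalSpace E] [IsTopologicalAddGroup E]
    [ContinuousSMul ℝ E] [LocallyConvexSpace ℝ E] [T2Space E] {φ : M →ₙ+ E}
    (hφ : Function.Injective φ) (f g : AddMonoidAlgebra R M) :
    convexHull ℝ (φ '' (f * g).coeff.support) =
      convexHull ℝ (φ '' f.coeff.support) + convexHull ℝ (φ '' g.coeff.support) := by
  classical
  rw [← convexHull_add]
  set S := φ '' f.coeff.support
  set T := φ '' g.coeff.support
  have hfin : (S + T).Finite :=
    (f.coeff.support.finite_toSet.image φ).add (g.coeff.support.finite_toSet.image φ)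
  have hsub : φ '' (f * g).coeff.support ⊆ S + T := by
    rw [← Set.image_add, ← Finset.coe_add]
    exact Set.image_mono (Finset.coe_subset.2 (AddMonoidAlgebra.support_coeff_mul_subset f g))
  have hext : (convexHull ℝ (S + T)).extremePoints ℝ ⊆ φ '' (f * g).coeff.support := by
    intro p hp
    obtain ⟨_, ⟨m, hm, rfl⟩, _, ⟨n, hn, rfl⟩, rfl⟩ := extremePoints_convexHull_subset hp
    have hcoeff : (f * g).coeff (m + n) = f.coeff m * g.coeff n :=
      AddMonoidAlgebra.coeff_mul_add_of_uniqueAdd (uniqueAdd_of_add_mem_extremePoints hφ hm hn hp)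
    refine ⟨m + n, Finsupp.mem_support_iff.2 (hcoeff ▸ ?_), map_add φ m n⟩
    exact mul_ne_zero (Finsupp.mem_support_iff.1 hm) (Finsupp.mem_support_iff.1 hn)
  refine (convexHull_mono hsub).antisymm ?_
  calc convexHull ℝ (S + T)
      = closure (convexHull ℝ ((convexHull ℝ (S + T)).extremePoints ℝ)) :=
        (closure_convexHull_extremePoints (hfin.isCompact_convexHull ℝ)
          (convex_convexHull ℝ _)).symm
    _ ⊆ convexHull ℝ (φ '' (f * g).coeff.support) := closure_minimal (convexHull_mono hext)
        (((f * g).coeff.support.finite_toSet.image φ).isClosed_convexHull ℝ)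

end Ostrowski

section InsertZero

variable {𝕜 E : Type*} [Field 𝕜] [LinearOrder 𝕜] [IsStrictOrderedRing 𝕜] [AddCommGroup E]
  [Module 𝕜 E] {S T : Set E}

theorem mem_of_add_smul_mem {C : Set E} (hC : Convex 𝕜 C) (h₀ : 0 ∈ C)
    {s : E} {r : 𝕜} (hr : 0 ≤ r) (hs : s + r • s ∈ C) : s ∈ C := by
  have hr₁ : 0 < 1 + r := by positivity
  have hmem : (1 + r)⁻¹ • (s + r • s) ∈ C :=
    hC.smul_mem_of_zero_mem h₀ hs ⟨by positivity, inv_le_one_of_one_le₀ (by linarith)⟩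
  have hcancel : (1 + r)⁻¹ • (s + r • s) = s := by
    rw [inv_smul_eq_iff₀ hr₁.ne', add_smul, one_smul]
  rwa [hcancel] at hmem

theorem subset_convexHull_insert_zero_add
    (hST : ∀ s ∈ S, s ≠ 0 → ∃ r : 𝕜, 0 ≤ r ∧ r • s ∈ convexHull 𝕜 T) :
    S ⊆ convexHull 𝕜 (insert 0 (S + T)) := by
  intro s hs
  have hzero : (0 : E) ∈ convexHull 𝕜 (insert 0 (S + T)) :=
    subset_convexHull 𝕜 _ (Set.mem_insert 0 _)
  obtain rfl | hs₀ := eq_or_ne s 0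
  · exact hzero
  obtain ⟨r, hr, hrs⟩ := hST s hs hs₀
  have hsum : s + r • s ∈ convexHull 𝕜 (S + T) := by
    rw [convexHull_add]
    exact Set.add_mem_add (subset_convexHull 𝕜 S hs) hrs
  exact mem_of_add_smul_mem (convex_convexHull 𝕜 (insert 0 (S + T))) hzero hr
    (convexHull_mono (Set.subset_insert 0 _) hsum)

theorem convexHull_insert_zero_add
    (hST : ∀ s ∈ S, s ≠ 0 → ∃ r : 𝕜, 0 ≤ r ∧ r • s ∈ convexHull 𝕜 T)
    (hTS : ∀ t ∈ T, t ≠ 0 → ∃ r : 𝕜, 0 ≤ r ∧ r • t ∈ convexHull 𝕜 S) :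
    convexHull 𝕜 (insert 0 (S + T)) = convexHull 𝕜 (insert 0 S) + convexHull 𝕜 (insert 0 T) := by
  rw [← convexHull_add]
  have hmono : S + T ⊆ convexHull 𝕜 (insert 0 (S + T)) :=
    (Set.subset_insert 0 _).trans (subset_convexHull 𝕜 _)
  refine (convexHull_mono ?_).antisymm (convexHull_min ?_ (convex_convexHull 𝕜 _))
  · exact Set.insert_subset ⟨0, Set.mem_insert 0 S, 0, Set.mem_insert 0 T, add_zero 0⟩
      (Set.add_subset_add (Set.subset_insert 0 S) (Set.subset_insert 0 T))
  · rintro _ ⟨s, rfl | hs, t, rfl | ht, rfl⟩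
    · simpa only [add_zero] using subset_convexHull 𝕜 _ (Set.mem_insert 0 (S + T))
    · simpa only [zero_add, add_comm S T] using subset_convexHull_insert_zero_add hTS ht
    · simpa only [add_zero] using subset_convexHull_insert_zero_add hST hs
    · exact hmono ⟨s, hs, t, ht, rfl⟩

end InsertZero

section Newton

theorem exists_smul_mem_convexHull_of_mem_axes {T : Set (ℝ × ℝ)} {c d : ℝ} (hc : 0 ≤ c)
    (hd : 0 ≤ d) (hcT : (c, 0) ∈ T) (hdT : (0, d) ∈ T) {p : ℝ × ℝ} (hp : 0 < p) :
    ∃ r : ℝ, 0 ≤ r ∧ r • p ∈ convexHull ℝ T := by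
  obtain rfl | hc := hc.eq_or_lt
  · exact ⟨0, le_rfl, (zero_smul ℝ p).symm ▸ subset_convexHull ℝ T hcT⟩
  obtain rfl | hd := hd.eq_or_lt
  · exact ⟨0, le_rfl, (zero_smul ℝ p).symm ▸ subset_convexHull ℝ T hdT⟩
  obtain ⟨x, y⟩ := p
  have hx : 0 ≤ x := hp.le.1
  have hy : 0 ≤ y := hp.le.2
  have hpos : 0 < d * x + c * y := by
    rcases Prod.lt_iff.1 hp with ⟨hx, -⟩ | ⟨-, hy⟩
    · exact add_pos_of_pos_of_nonneg (mul_pos hd hx) (mul_nonneg hc.le hy)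
    · exact add_pos_of_nonneg_of_pos (mul_nonneg hd.le hx) (mul_pos hc hy)
  refine ⟨c * d / (d * x + c * y), by positivity, ?_⟩
  have hcomb : (c * d / (d * x + c * y)) • (x, y) =
      (d * x / (d * x + c * y)) • (c, (0 : ℝ)) + (c * y / (d * x + c * y)) • ((0 : ℝ), d) := by
    simp only [Prod.smul_mk, Prod.mk_add_mk, smul_eq_mul, mul_zero, add_zero, zero_add,
      Prod.mk.injEq]
    constructor <;> ring
  rw [hcomb]
  exact convex_convexHull ℝ T (subset_convexHull ℝ T hcT) (subset_convexHull ℝ T hdT)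
    (by positivity) (by positivity) (by rw [← add_div, div_self hpos.ne'])

/-- Exponent vectors seen as points of the plane that contains the Newton diagrams. -/
def latticePoint : (Fin 2 →₀ ℕ) →+ ℝ × ℝ where
  toFun m := (m 0, m 1)
  map_zero' := by simp
  map_add' m n := by simp

theorem latticePoint_injective : Function.Injective latticePoint := by
  intro m n h
  ext i
  fin_cases i
  · exact Nat.cast_injective (congrArg Prod.fst h)
  · exact Nat.cast_injective (congrArg Prod.snd h)

theorem latticePoint_nonneg (m : Fin 2 →₀ ℕ) : 0 ≤ latticePoint m :=
  ⟨Nat.cast_nonneg (m 0), Nat.cast_nonneg (m 1)⟩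

theorem newton_eq_convexHull_insert (f : P2) :
    newton f = convexHull ℝ (insert 0 (latticePoint '' f.support)) := by
  have himage : {p : ℝ × ℝ | ∃ m ∈ f.support, p = ((m 0 : ℝ), (m 1 : ℝ))} =
      latticePoint '' f.support :=
    Set.ext fun p ↦ exists_congr fun m ↦ and_congr_right' eq_comm
  rw [newton, himage, Set.singleton_union]
  rfl

theorem isCompact_newton (f : P2) : IsCompact (newton f) := by
  rw [newton_eq_convexHull_insert]
  exact ((f.support.finite_toSet.image latticePoint).insert 0).isCompact_convexHull ℝ

theorem convex_newton (f : P2) : Convex ℝ (newton f) :=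
  convex_convexHull ℝ _

theorem zero_mem_newton (f : P2) : 0 ∈ newton f :=
  subset_convexHull ℝ _ (.inl rfl)

theorem latticePoint_mem_newton {f : P2} {m : Fin 2 →₀ ℕ} (hm : m ∈ f.support) :
    latticePoint m ∈ newton f :=
  subset_convexHull ℝ _ (.inr ⟨m, hm, rfl⟩)

theorem newton_nontrivial {f : P2} (hf : 0 < f.totalDegree) : (newton f).Nontrivial := by
  obtain ⟨m, hm, hm₀⟩ : ∃ m ∈ f.support, m ≠ 0 := by
    by_contra! h
    exact hf.ne' ((totalDegree_eq_zero_iff (p := f)).2 fun m hm i ↦ by rw [h m hm]; rfl)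
  refine ⟨_, latticePoint_mem_newton hm, 0, zero_mem_newton f, ?_⟩
  exact (map_ne_zero_iff latticePoint latticePoint_injective).2 hm₀

theorem QuasiConvenient.exists_smul_mem_convexHull {f : P2} (hf : QuasiConvenient f)
    {p : ℝ × ℝ} (hp : 0 < p) :
    ∃ r : ℝ, 0 ≤ r ∧ r • p ∈ convexHull ℝ (latticePoint '' f.support) := by
  obtain ⟨⟨a, ha⟩, b, hb⟩ := hf
  have hX : ((a : ℝ), (0 : ℝ)) ∈ latticePoint '' f.support :=
    ⟨Finsupp.single 0 a, mem_support_iff.2 ha, by simp [latticePoint]⟩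
  have hY : ((0 : ℝ), (b : ℝ)) ∈ latticePoint '' f.support :=
    ⟨Finsupp.single 1 b, mem_support_iff.2 hb, by simp [latticePoint]⟩
  exact exists_smul_mem_convexHull_of_mem_axes a.cast_nonneg b.cast_nonneg hX hY hp

theorem newton_mul {f g : P2} (hf : QuasiConvenient f) (hg : QuasiConvenient g) :
    newton (f * g) = newton f + newton g := by
  have hpos {h : P2} : ∀ p ∈ latticePoint '' h.support, p ≠ 0 → 0 < p := by
    rintro _ ⟨m, -, rfl⟩ hm
    exact (latticePoint_nonneg m).lt_of_ne' hm
  have hostrowski := convexHull_image_support_mul (φ := (latticePoint : _ →ₙ+ ℝ × ℝ))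
    latticePoint_injective f g
  rw [← convexHull_add] at hostrowski
  calc newton (f * g)
      = convexHull ℝ (insert 0 (convexHull ℝ (latticePoint '' (f * g).support))) := by
        rw [newton_eq_convexHull_insert, Set.insert_eq, Set.insert_eq,
          convexHull_convexHull_union_right]
    _ = convexHull ℝ (insert 0 (latticePoint '' f.support + latticePoint '' g.support)) := by
        rw [Set.insert_eq, Set.insert_eq, ← convexHull_convexHull_union_right _ (_ + _)]
        exact congrArg (fun C ↦ convexHull ℝ ({0} ∪ C)) hostrowski
    _ = newton f + newton g := by
        rw [newton_eq_convexHull_insert, newton_eq_convexHull_insert]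
        exact convexHull_insert_zero_add
          (fun s hs hs₀ ↦ hg.exists_smul_mem_convexHull (hpos s hs hs₀))
          (fun t ht ht₀ ↦ hf.exists_smul_mem_convexHull (hpos t ht ht₀))

theorem nuInf_eq_zero_iff {f g : P2} (hf : QuasiConvenient f) (hg : QuasiConvenient g) :
    nuInf f g = 0 ↔
      volume (newton f + newton g) = volume (newton f) + volume (newton g) := by
  have hfin (h : P2) : volume (newton h) ≠ ⊤ := (isCompact_newton h).measure_ne_top
  have hfin_add : volume (newton f + newton g) ≠ ⊤ := newton_mul hf hg ▸ hfin (f * g)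
  rw [nuInf, newton_mul hf hg, sub_sub, sub_eq_zero, area, area, area,
    ← ENNReal.toReal_add (hfin f) (hfin g),
    ENNReal.toReal_eq_toReal_iff' hfin_add (ENNReal.add_ne_top.2 ⟨hfin f, hfin g⟩)]

end Newton

/-- `ν∞(f, g) = 0` iff both Newton diagrams are segments lying on one and the
same straight line through the origin. -/
theorem stmt5 (f g : P2) (hf : QuasiConvenient f) (hg : QuasiConvenient g)
    (hdf : 0 < f.totalDegree) (hdg : 0 < g.totalDegree) :
    nuInf f g = 0 ↔
      ∃ v : ℝ × ℝ, ∃ a b c d : ℝ,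
        newton f = segment ℝ (a • v) (b • v) ∧
        newton g = segment ℝ (c • v) (d • v) := by
  have hdim : Module.finrank ℝ (ℝ × ℝ) = 2 := by
    rw [Module.finrank_prod, Module.finrank_self]
  calc nuInf f g = 0
      ↔ volume (newton f + newton g) = volume (newton f) + volume (newton g) :=
        nuInf_eq_zero_iff hf hg
    _ ↔ Collinear ℝ (newton f + newton g) :=
        measure_add_eq_iff_collinear hdim volume (isCompact_newton f) (isCompact_newton g)
          (convex_newton f) (convex_newton g) (newton_nontrivial hdf) (newton_nontrivial hdg)
    _ ↔ _ := collinear_add_iff_exists_segment (isCompact_newton f) (isCompact_newton g)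
          (convex_newton f) (convex_newton g) (zero_mem_newton f) (zero_mem_newton g)
end
end

section
/- Main theorem (near irreducibility criterion): Let f ∈ ℂ[X,Y] be quasi-convenient and nondegenerate at infinity, and suppose that for every nonzero vector w = [p,q] with pq ≤ 0, the system init(f,w)(X,Y) = init(f,−w)(X,Y) = 0 has no solution in (ℂ*)². Then f is nearly irreducible: any two nonconstant polynomial factors of f have a common zero in ℂ². -/
open MvPolynomial MeasureTheory Pointwise

noncomputable section

/-!
Two irreducible factors `g`, `h` of `f` with `g * h ∣ f` form a pair nondegenerate at infinity.
Suppose they have no common zero. By the Nullstellensatz `h` is then a unit on the curve `g = 0`;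
if it were not constant there, some valuation `v` of the function field, trivial on `ℂ`, would
satisfy `v h < 1`, and a coordinate would have a pole at `v`. As `g` vanishes on the curve, the
values of the two coordinates are commensurable, so the coordinates are `ξ z ^ p` and `η z ^ q`
with `v ξ = v η = 1 < v z`, and the initial forms of `g` and `h` for `(p, q)` have value less than
`1` at `(ξ, η)`. These forms have no common zero in `(ℂ*)²`, so by the Nullstellensatz a power of
`ξ η` has value less than `1`, which is absurd. Hence `g` divides `h - c` and, symmetrically, `h`
divides `g - d` for constants `c`, `d`, and comparing degrees gives `h = c + b g` with `b ≠ 0`. If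
the Newton polygon of `g` had an edge on a line `w = d` with `d > 0`, the initial forms of `g` and
`h` for `w` would be proportional and would have a common zero in `(ℂ*)²`. So `g` is homogeneous
of weight `0` for some `w ≠ 0`; then `g` is its own initial form for both `w` and `-w`, and its
zeros in `(ℂ*)²` are the forbidden ones. In place of the Kouchnirenko–Bernstein theorem, this uses
only valuations and the Nullstellensatz.
-/

section Nullstellensatz

variable {σ k : Type*} [Field k] [IsAlgClosed k]

lemma prod_X_mem_radical_of_forall_torus [Fintype σ] {I : Ideal (MvPolynomial σ k)}
    (hI : ∀ x : σ → k, (∀ i, x i ≠ 0) → ∃ F ∈ I, eval x F ≠ 0) :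
    ∏ i, X i ∈ I.radical := by
  rw [← vanishingIdeal_zeroLocus_eq_radical (K := k), mem_vanishingIdeal_iff]
  intro x hx
  by_contra hne
  rw [← ne_eq, map_prod, Finset.prod_ne_zero_iff] at hne
  obtain ⟨F, hF, hFx⟩ := hI x fun i => by simpa only [aeval_X] using hne i (Finset.mem_univ i)
  exact hFx (hx F hF)

lemma ideal_eq_top_of_forall_exists_eval_ne_zero [Finite σ] {I : Ideal (MvPolynomial σ k)}
    (hI : ∀ x : σ → k, ∃ F ∈ I, eval x F ≠ 0) : I = ⊤ := by
  have hlocus : zeroLocus k I = ∅ := Set.eq_empty_iff_forall_notMem.2 fun x hx =>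
    let ⟨F, hF, hFx⟩ := hI x
    hFx (hx F hF)
  rw [← Ideal.radical_eq_top, ← vanishingIdeal_zeroLocus_eq_radical (K := k), hlocus,
    vanishingIdeal_empty]

lemma exists_torus_zero_of_support_nontrivial [Finite σ] {F : MvPolynomial σ k}
    (hF : F.support.Nontrivial) : ∃ x : σ → k, (∀ i, x i ≠ 0) ∧ eval x F = 0 := by
  have := Fintype.ofFinite σ
  by_contra! hzero
  obtain ⟨n, hn⟩ := prod_X_mem_radical_of_forall_torus (I := Ideal.span {F})
    fun x hx => ⟨F, Ideal.mem_span_singleton_self F, hzero x hx⟩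
  have hmonomial : (∏ i, X i : MvPolynomial σ k) ^ n =
      monomial (n • ∑ i, Finsupp.single i 1) 1 := by
    simp only [X, ← monomial_sum_one, monomial_pow, one_pow]
  rw [Ideal.mem_span_singleton, hmonomial, dvd_monomial_one_iff_exists] at hn
  obtain ⟨m, c, -, -, rfl⟩ := hn
  exact hF.not_subset_singleton support_monomial_subset

end Nullstellensatz

section Valuation

lemma exists_zpow_eq_of_zpow_eq_zpow {G : Type*} [CommGroup G] [IsMulTorsionFree G] {a b : G}
    {i j : ℤ} (hij : i ≠ 0 ∨ j ≠ 0) (h : a ^ i = b ^ j) :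
    ∃ r s p q : ℤ, (a ^ r * b ^ s) ^ p = a ∧ (a ^ r * b ^ s) ^ q = b := by
  have hd : 0 < Int.gcd i j := Int.gcd_pos_iff.2 hij
  obtain ⟨i', j', hcoprime, hi, hj⟩ := Int.exists_gcd_one hd
  obtain ⟨s, r, hbezout⟩ := Int.isCoprime_iff_gcd_eq_one.2 hcoprime
  have h' : a ^ i' = b ^ j' := by
    rw [← zpow_left_inj (n := (Int.gcd i j : ℤ)) (by exact_mod_cast hd.ne'), ← zpow_mul,
      ← zpow_mul, ← hi, ← hj, h]
  refine ⟨r, s, j', i', ?_, ?_⟩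
  · calc (a ^ r * b ^ s) ^ j' = a ^ (r * j') * (b ^ j') ^ s := by
          rw [mul_zpow, ← zpow_mul, ← zpow_mul, ← zpow_mul, mul_comm s]
      _ = a ^ (s * i' + r * j') := by rw [← h', ← zpow_mul, ← zpow_add, add_comm, mul_comm s]
      _ = a := by rw [hbezout, zpow_one]
  · calc (a ^ r * b ^ s) ^ i' = (a ^ i') ^ r * b ^ (s * i') := by
          rw [mul_zpow, ← zpow_mul, ← zpow_mul, ← zpow_mul, mul_comm r]
      _ = b ^ (s * i' + r * j') := by rw [h', ← zpow_mul, ← zpow_add, add_comm, mul_comm j']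
      _ = b := by rw [hbezout, zpow_one]

lemma exists_valuationSubring_of_not_isIntegral {k K : Type*} [Field k] [Field K] [Algebra k K]
    {t : K} (ht : ¬ IsIntegral k t) :
    ∃ V : ValuationSubring K, V.valuation.IsTrivialOn k ∧ 1 < V.valuation t := by
  obtain ⟨V, hV, htV⟩ := Subring.exists_le_valuationSubring_of_isIntegrallyClosedIn
    (R := (integralClosure k K).toSubring) (x := t) ht
  refine ⟨V, .of_le_one V.valuation fun c => ?_, ?_⟩
  · exact (V.valuation_le_one_iff _).2 (hV (algebraMap_mem (integralClosure k K) c))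
  · rwa [← not_le, V.valuation_le_one_iff]

variable {σ k K Γ : Type*} [Field k] [Field K] [Algebra k K]
  [LinearOrderedCommGroupWithZero Γ] (v : Valuation K Γ)

lemma exists_zpow_valuation_eq {x y : K} (hx : x ≠ 0) (hy : y ≠ 0)
    (hxy : 1 < v x ∨ 1 < v y) {i j : ℤ} (hij : i ≠ 0 ∨ j ≠ 0) (h : v x ^ i = v y ^ j) :
    ∃ z : K, 1 < v z ∧ ∃ p q : ℤ, v (z ^ p) = v x ∧ v (z ^ q) = v y := by
  obtain ⟨r, s, p, q, hp, hq⟩ := exists_zpow_eq_of_zpow_eq_zpow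
    (a := Units.mk0 (v x) (v.ne_zero_iff.2 hx)) (b := Units.mk0 (v y) (v.ne_zero_iff.2 hy)) hij
    (by ext; simpa only [Units.val_zpow_eq_zpow_val, Units.val_mk0] using h)
  simp only [Units.ext_iff, Units.val_zpow_eq_zpow_val, Units.val_mul, Units.val_mk0,
    ← map_zpow₀, ← map_mul] at hp hq
  rcases lt_trichotomy (v (x ^ r * y ^ s)) 1 with hlt | heq | hgt
  · refine ⟨(x ^ r * y ^ s)⁻¹, ?_, -p, -q, ?_, ?_⟩
    · rw [map_inv₀]
      exact (one_lt_inv₀ (v.pos_iff.2 (mul_ne_zero (zpow_ne_zero r hx) (zpow_ne_zero s hy)))).2 hlt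
    · rw [inv_zpow', neg_neg, hp]
    · rw [inv_zpow', neg_neg, hq]
  · rw [← hp, ← hq, map_zpow₀, map_zpow₀, heq, one_zpow, one_zpow] at hxy
    simp only [lt_irrefl, or_self] at hxy
  · exact ⟨_, hgt, p, q, hp, hq⟩

variable [v.IsTrivialOn k] {x : σ → K}

lemma valuation_aeval_monomial (x : σ → K) (m : σ →₀ ℕ) {c : k} (hc : c ≠ 0) :
    v (aeval x (monomial m c)) = m.prod fun i e => v (x i) ^ e := by
  rw [aeval_monomial, map_mul, Valuation.IsTrivialOn.eq_one c hc, one_mul, map_finsuppProd]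
  simp only [map_pow]

lemma valuation_aeval_le_one (hx : ∀ i, v (x i) ≤ 1) (F : MvPolynomial σ k) :
    v (aeval x F) ≤ 1 := by
  rw [F.as_sum, map_sum]
  refine v.map_sum_le fun m hm => ?_
  rw [valuation_aeval_monomial v x m (mem_support_iff.1 hm)]
  exact Finset.prod_le_one' fun i _ => pow_le_one' (hx i) _

lemma valuation_aeval_lt_one_of_mem_radical {S : Set (MvPolynomial σ k)}
    (hx : ∀ i, v (x i) ≤ 1) (hS : ∀ F ∈ S, v (aeval x F) < 1) {F : MvPolynomial σ k}
    (hF : F ∈ (Ideal.span S).radical) : v (aeval x F) < 1 := by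
  have hspan : ∀ G ∈ Ideal.span S, v (aeval x G) < 1 := fun G hG => by
    induction hG using Submodule.span_induction with
    | mem G hG => exact hS G hG
    | zero => simp only [map_zero, zero_lt_one]
    | add G H _ _ hG hH => rw [map_add]; exact v.map_add_lt hG hH
    | smul A G _ hG =>
      rw [smul_eq_mul, map_mul, map_mul]
      exact (mul_le_of_le_one_left' (valuation_aeval_le_one v hx A)).trans_lt hG
  obtain ⟨n, hn⟩ := hF
  have hpow := hspan _ hn
  rw [map_pow, map_pow] at hpow
  exact lt_of_not_ge fun hge => hpow.not_ge (one_le_pow₀ hge)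

lemma exists_ne_valuation_prod_eq_of_aeval_eq_zero {F : MvPolynomial σ k} (hF : F ≠ 0)
    (hx : ∀ i, x i ≠ 0) (hFx : aeval x F = 0) :
    ∃ m n : σ →₀ ℕ, m ≠ n ∧
      (m.prod fun i e => v (x i) ^ e) = n.prod fun i e => v (x i) ^ e := by
  classical
  obtain ⟨m, hm, hmax⟩ := F.support.exists_max_image
    (fun m => m.prod fun i e => v (x i) ^ e) (support_nonempty.2 hF)
  by_contra! hne
  have hterm : ∀ n ∈ F.support,
      v (aeval x (monomial n (coeff n F))) = n.prod fun i e => v (x i) ^ e :=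
    fun n hn => valuation_aeval_monomial v x n (mem_support_iff.1 hn)
  have hdominant := v.map_sum_eq_of_lt hm fun n hn => by
    obtain ⟨hn, hnm⟩ := Finset.mem_sdiff.1 hn
    rw [hterm n hn, hterm m hm]
    exact (hmax n hn).lt_of_ne (hne n m fun h => hnm (Finset.mem_singleton.2 h))
  rw [← map_sum, ← F.as_sum, hFx, map_zero, hterm m hm] at hdominant
  exact Finset.prod_ne_zero_iff.2 (fun i _ => pow_ne_zero _ (v.ne_zero_iff.2 (hx i)))
    hdominant.symm

end Valuation

section InitialForms

variable {w : ℝ × ℝ} {f g h : P2}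

lemma wt_add (w : ℝ × ℝ) (m n : Fin 2 →₀ ℕ) : wt w (m + n) = wt w m + wt w n := by
  simp only [wt, Finsupp.add_apply, Nat.cast_add]
  ring

lemma isGreatest_dw (w : ℝ × ℝ) (hf : f ≠ 0) :
    IsGreatest (wt w '' (f.support : Set (Fin 2 →₀ ℕ))) (dw w f) := by
  have hfinite := f.support.finite_toSet.image (wt w)
  have hne : (wt w '' (f.support : Set (Fin 2 →₀ ℕ))).Nonempty :=
    (Finset.coe_nonempty.2 (support_nonempty.2 hf)).image _
  exact ⟨hne.csSup_mem hfinite, fun _ hm => le_csSup hfinite.bddAbove hm⟩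

lemma exists_wt_eq_dw (w : ℝ × ℝ) (hf : f ≠ 0) : ∃ m ∈ f.support, wt w m = dw w f :=
  (isGreatest_dw w hf).1

lemma wt_le_dw {m : Fin 2 →₀ ℕ} (hm : m ∈ f.support) : wt w m ≤ dw w f :=
  (isGreatest_dw w (support_nonempty.1 ⟨m, hm⟩)).2 ⟨m, hm, rfl⟩

open Classical in
lemma coeff_initForm (w : ℝ × ℝ) (f : P2) (m : Fin 2 →₀ ℕ) :
    coeff m (initForm w f) = if wt w m = dw w f then coeff m f else 0 := by
  simp only [initForm, coeff_sum, apply_ite (coeff m), coeff_monomial, coeff_zero]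
  rw [Finset.sum_eq_single m]
  · simp only [if_true]
  · intro n _ hnm
    simp only [hnm, if_false, ite_self]
  · intro hm
    simp only [notMem_support_iff.1 hm, ite_self]

lemma mem_support_initForm {m : Fin 2 →₀ ℕ} :
    m ∈ (initForm w f).support ↔ m ∈ f.support ∧ wt w m = dw w f := by
  classical
  rw [mem_support_iff, coeff_initForm, ite_ne_right_iff, mem_support_iff, and_comm]

lemma initForm_ne_zero (w : ℝ × ℝ) (hf : f ≠ 0) : initForm w f ≠ 0 := by
  obtain ⟨m, hm, hwt⟩ := exists_wt_eq_dw w hf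
  exact support_nonempty.1 ⟨m, mem_support_initForm.2 ⟨hm, hwt⟩⟩

lemma wt_lt_dw_of_mem_support_sub_initForm {m : Fin 2 →₀ ℕ}
    (hm : m ∈ (f - initForm w f).support) : wt w m < dw w f := by
  classical
  rw [mem_support_iff, coeff_sub, coeff_initForm] at hm
  split_ifs at hm with hwt
  · exact absurd (sub_self _) hm
  · exact (wt_le_dw (mem_support_iff.2 (by simpa only [sub_zero] using hm))).lt_of_ne hwt

lemma dw_add_of_wt_lt {d : ℝ} (hfd : ∀ m ∈ f.support, wt w m = d)
    (hgd : ∀ m ∈ g.support, wt w m < d) (hf : f ≠ 0) : dw w (f + g) = d := by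
  classical
  refine IsGreatest.csSup_eq ⟨?_, ?_⟩
  · obtain ⟨m, hm⟩ := support_nonempty.2 hf
    have hmg : coeff m g = 0 := notMem_support_iff.1 fun hmg => (hgd m hmg).ne (hfd m hm)
    refine ⟨m, mem_support_iff.2 ?_, hfd m hm⟩
    rwa [coeff_add, hmg, add_zero, ← mem_support_iff]
  · rintro _ ⟨m, hm, rfl⟩
    exact (Finset.mem_union.1 (support_add hm)).elim (fun hmf => (hfd m hmf).le)
      fun hmg => (hgd m hmg).le

lemma initForm_add_of_wt_lt {d : ℝ} (hfd : ∀ m ∈ f.support, wt w m = d)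
    (hgd : ∀ m ∈ g.support, wt w m < d) (hf : f ≠ 0) : initForm w (f + g) = f := by
  classical
  ext m
  rw [coeff_initForm, dw_add_of_wt_lt hfd hgd hf, coeff_add]
  split_ifs with hm
  · rw [notMem_support_iff.1 fun hmg => (hgd m hmg).ne hm, add_zero]
  · exact (notMem_support_iff.1 fun hmf => hm (hfd m hmf)).symm

lemma initForm_zero (w : ℝ × ℝ) : initForm w 0 = 0 := by
  simp only [initForm, support_zero, Finset.sum_empty]

lemma initForm_eq_self {d : ℝ} (hfd : ∀ m ∈ f.support, wt w m = d) : initForm w f = f := by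
  rcases eq_or_ne f 0 with rfl | hf
  · exact initForm_zero w
  · simpa only [add_zero] using initForm_add_of_wt_lt (g := 0) hfd (by simp) hf

lemma initForm_mul (w : ℝ × ℝ) (f g : P2) :
    initForm w (f * g) = initForm w f * initForm w g := by
  classical
  rcases eq_or_ne f 0 with rfl | hf
  · rw [zero_mul, initForm_zero, zero_mul]
  rcases eq_or_ne g 0 with rfl | hg
  · rw [mul_zero, initForm_zero, mul_zero]
  have hdecomp : f * g = initForm w f * initForm w g +
      (initForm w f * (g - initForm w g) + (f - initForm w f) * g) := by ring
  rw [hdecomp]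
  refine initForm_add_of_wt_lt (d := dw w f + dw w g) (fun m hm => ?_) (fun m hm => ?_)
    (mul_ne_zero (initForm_ne_zero w hf) (initForm_ne_zero w hg))
  · obtain ⟨a, ha, b, hb, rfl⟩ := Finset.mem_add.1 (support_mul _ _ hm)
    rw [wt_add, (mem_support_initForm.1 ha).2, (mem_support_initForm.1 hb).2]
  · rcases Finset.mem_union.1 (support_add hm) with hm | hm <;>
      obtain ⟨a, ha, b, hb, rfl⟩ := Finset.mem_add.1 (support_mul _ _ hm) <;> rw [wt_add]
    · exact add_lt_add_of_le_of_lt (mem_support_initForm.1 ha).2.le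
        (wt_lt_dw_of_mem_support_sub_initForm hb)
    · exact add_lt_add_of_lt_of_le (wt_lt_dw_of_mem_support_sub_initForm ha) (wt_le_dw hb)

lemma eval_initForm_eq_zero_of_dvd (hgf : g ∣ f) {x : Fin 2 → ℂ}
    (hx : eval x (initForm w g) = 0) : eval x (initForm w f) = 0 := by
  obtain ⟨k, rfl⟩ := hgf
  rw [initForm_mul, map_mul, hx, zero_mul]

lemma ne_zero_of_dw_pos (hw : 0 < dw w f) : f ≠ 0 := by
  rintro rfl
  simp [dw] at hw

lemma initForm_C_add_C_mul {b : ℂ} (hb : b ≠ 0) (c : ℂ) (hw : 0 < dw w g) :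
    initForm w (C c + C b * g) = C b * initForm w g := by
  classical
  have hdecomp : C c + C b * g = C b * initForm w g + (C c + C b * (g - initForm w g)) := by ring
  rw [hdecomp]
  refine initForm_add_of_wt_lt (d := dw w g) (fun m hm => ?_) (fun m hm => ?_)
    (mul_ne_zero (C_ne_zero.2 hb) (initForm_ne_zero w (ne_zero_of_dw_pos hw)))
  · rw [C_mul', support_smul_eq hb] at hm
    exact (mem_support_initForm.1 hm).2
  · rcases Finset.mem_union.1 (support_add hm) with hm | hm
    · rw [Finset.mem_singleton.1 (support_monomial_subset hm)]
      simpa [wt] using hw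
    · rw [C_mul', support_smul_eq hb] at hm
      exact wt_lt_dw_of_mem_support_sub_initForm hm

lemma pos_or_pos_of_dw_pos (hw : 0 < dw w f) : 0 < w.1 ∨ 0 < w.2 := by
  obtain ⟨m, -, hm⟩ := exists_wt_eq_dw w (ne_zero_of_dw_pos hw)
  by_contra! hneg
  have hwt : wt w m ≤ 0 := add_nonpos (mul_nonpos_of_nonpos_of_nonneg hneg.1 (Nat.cast_nonneg _))
    (mul_nonpos_of_nonpos_of_nonneg hneg.2 (Nat.cast_nonneg _))
  exact hw.not_ge (hm ▸ hwt)

end InitialForms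

section QuasiConvenient

variable {f g h : P2}

lemma X_dvd_iff_forall_coeff_eq_zero {σ R : Type*} [CommSemiring R] {i : σ}
    {F : MvPolynomial σ R} : X i ∣ F ↔ ∀ m : σ →₀ ℕ, m i = 0 → coeff m F = 0 := by
  classical
  refine ⟨?_, fun hF => ?_⟩
  · rintro ⟨G, rfl⟩ m hm
    rw [coeff_X_mul', if_neg (by simpa only [Finsupp.mem_support_iff, not_not] using hm)]
  · rw [X_dvd_iff_modMonomial_eq_zero]
    ext m
    by_cases hm : Finsupp.single i 1 ≤ m
    · rw [coeff_modMonomial_of_le _ hm, coeff_zero]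
    · rw [coeff_modMonomial_of_not_le _ hm, coeff_zero]
      rw [Finsupp.single_le_iff, Nat.one_le_iff_ne_zero, not_not] at hm
      exact hF m hm

lemma quasiConvenient_iff_not_X_dvd : QuasiConvenient f ↔ ∀ i, ¬ X i ∣ f := by
  simp only [X_dvd_iff_forall_coeff_eq_zero, QuasiConvenient, not_forall, Fin.forall_fin_two]
  rw [and_comm]
  refine and_congr ⟨?_, ?_⟩ ⟨?_, ?_⟩
  · rintro ⟨b, hb⟩
    exact ⟨_, Finsupp.single_eq_of_ne (by decide), hb⟩
  · rintro ⟨m, hm, hmf⟩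
    have hsingle : m = Finsupp.single 1 (m 1) := by
      ext i
      fin_cases i <;> simp [hm]
    exact ⟨m 1, hsingle ▸ hmf⟩
  · rintro ⟨a, ha⟩
    exact ⟨_, Finsupp.single_eq_of_ne (by decide), ha⟩
  · rintro ⟨m, hm, hmf⟩
    have hsingle : m = Finsupp.single 0 (m 0) := by
      ext i
      fin_cases i <;> simp [hm]
    exact ⟨m 0, hsingle ▸ hmf⟩

lemma QuasiConvenient.of_dvd (hf : QuasiConvenient f) (hgf : g ∣ f) : QuasiConvenient g :=
  quasiConvenient_iff_not_X_dvd.2 fun i hi =>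
    quasiConvenient_iff_not_X_dvd.1 hf i (hi.trans hgf)

lemma QuasiConvenient.ne_zero (hf : QuasiConvenient f) : f ≠ 0 := by
  rintro rfl
  exact quasiConvenient_iff_not_X_dvd.1 hf 0 (dvd_zero _)

lemma exists_mem_support_ne_zero {σ R : Type*} [CommSemiring R] {F : MvPolynomial σ R}
    (hF : 0 < F.totalDegree) : ∃ m ∈ F.support, m ≠ 0 := by
  by_contra! hzero
  exact hF.ne' ((totalDegree_eq_zero_iff _ F).2 fun m hm i => by
    rw [hzero m hm, Finsupp.zero_apply])

lemma QuasiConvenient.support_nontrivial (hf : QuasiConvenient f) (hdeg : 0 < f.totalDegree) :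
    f.support.Nontrivial := by
  obtain ⟨m, hm, hm0⟩ := exists_mem_support_ne_zero hdeg
  obtain ⟨⟨a, ha⟩, ⟨b, hb⟩⟩ := hf
  by_contra hsub
  rw [Finset.Nontrivial, Set.not_nontrivial_iff] at hsub
  have hma : m = Finsupp.single 0 a := hsub hm (mem_support_iff.2 ha)
  have hmb : m = Finsupp.single 1 b := hsub hm (mem_support_iff.2 hb)
  refine hm0 (Finsupp.ext (Fin.forall_fin_two.2 ⟨?_, ?_⟩))
  · rw [hmb, Finsupp.single_eq_of_ne (by decide), Finsupp.zero_apply]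
  · rw [hma, Finsupp.single_eq_of_ne (by decide), Finsupp.zero_apply]

lemma QuasiConvenient.dw_nonneg (hf : QuasiConvenient f) {w : ℝ × ℝ}
    (hw : 0 < w.1 ∨ 0 < w.2) : 0 ≤ dw w f := by
  obtain ⟨⟨a, ha⟩, ⟨b, hb⟩⟩ := hf
  rcases hw with hw | hw
  · calc 0 ≤ w.1 * a := by positivity
      _ = wt w (Finsupp.single 0 a) := by simp [wt]
      _ ≤ dw w f := wt_le_dw (mem_support_iff.2 ha)
  · calc 0 ≤ w.2 * b := by positivity
      _ = wt w (Finsupp.single 1 b) := by simp [wt]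
      _ ≤ dw w f := wt_le_dw (mem_support_iff.2 hb)

end QuasiConvenient

section Nondegeneracy

variable {f g h : P2}

lemma exists_fin_two_forall_ne_zero_and_iff {k : Type*} [Zero k] {P : (Fin 2 → k) → Prop} :
    (∃ x : Fin 2 → k, (∀ i, x i ≠ 0) ∧ P x) ↔ ∃ x y : k, x ≠ 0 ∧ y ≠ 0 ∧ P ![x, y] := by
  refine ⟨fun ⟨x, hx, hPx⟩ => ⟨x 0, x 1, hx 0, hx 1, ?_⟩,
    fun ⟨x, y, hx, hy, hP⟩ => ⟨![x, y], Fin.forall_fin_two.2 ⟨hx, hy⟩, hP⟩⟩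
  convert hPx using 1
  exact List.ofFn_inj.1 rfl

lemma pairNondegAtInf_iff : PairNondegAtInf g h ↔ ∀ w : ℝ × ℝ, (0 < w.1 ∨ 0 < w.2) →
    ∀ x : Fin 2 → ℂ, (∀ i, x i ≠ 0) →
      eval x (initForm w g) = 0 → eval x (initForm w h) ≠ 0 := by
  refine forall₂_congr fun w _ => ?_
  rw [← exists_fin_two_forall_ne_zero_and_iff
    (P := fun x => eval x (initForm w g) = 0 ∧ eval x (initForm w h) = 0)]
  simp only [not_exists, not_and, ne_eq]

lemma PairNondegAtInf.symm (hgh : PairNondegAtInf g h) : PairNondegAtInf h g :=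
  pairNondegAtInf_iff.2 fun w hw x hx hhx hgx => pairNondegAtInf_iff.1 hgh w hw x hx hgx hhx

lemma NondegAtInf.pairNondegAtInf (hf : NondegAtInf f) (hghf : g * h ∣ f) :
    PairNondegAtInf g h := by
  obtain ⟨k, rfl⟩ := hghf
  rintro w hw ⟨x, y, hx, hy, hgx, hhx⟩
  refine hf w hw ⟨x, y, hx, hy, ?_, ?_, ?_⟩ <;>
    simp only [initForm_mul, Derivation.leibniz, smul_eq_mul, map_mul, map_add, hgx, hhx,
      zero_mul, mul_zero, add_zero]

lemma PairNondegAtInf.prod_X_mem_radical (hgh : PairNondegAtInf g h) {w : ℝ × ℝ}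
    (hw : 0 < w.1 ∨ 0 < w.2) :
    ∏ i, X i ∈ (Ideal.span {initForm w g, initForm w h}).radical := by
  refine prod_X_mem_radical_of_forall_torus fun x hx => ?_
  by_cases hgx : eval x (initForm w g) = 0
  · exact ⟨_, Ideal.subset_span (by simp), pairNondegAtInf_iff.1 hgh w hw x hx hgx⟩
  · exact ⟨_, Ideal.subset_span (by simp), hgx⟩

end Nondegeneracy

section ValuationAtInfinity

variable {K Γ : Type*} [Field K] [Algebra ℂ K] [LinearOrderedCommGroupWithZero Γ]
  {v : Valuation K Γ} {ξ : Fin 2 → K} {z : K} {e : Fin 2 → ℤ} {D : ℤ} {F g h : P2}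

lemma wt_intCast (e : Fin 2 → ℤ) (m : Fin 2 →₀ ℕ) :
    wt (e 0, e 1) m = ((e 0 * m 0 + e 1 * m 1 : ℤ) : ℝ) := by
  simp only [wt, Int.cast_add, Int.cast_mul, Int.cast_natCast]

lemma exists_dw_eq_intCast (e : Fin 2 → ℤ) (hF : F ≠ 0) : ∃ D : ℤ, dw (e 0, e 1) F = D := by
  obtain ⟨m, -, hm⟩ := exists_wt_eq_dw (e 0, e 1) hF
  exact ⟨_, hm.symm.trans (wt_intCast e m)⟩

lemma aeval_mul_zpow_monomial (hz : z ≠ 0) (m : Fin 2 →₀ ℕ) (c : ℂ) :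
    aeval (fun i => ξ i * z ^ e i) (monomial m c) =
      z ^ (e 0 * m 0 + e 1 * m 1) * aeval ξ (monomial m c) := by
  have hpow : ∀ i, (ξ i * z ^ e i) ^ m i = z ^ (e i * m i) * ξ i ^ m i := fun i => by
    rw [mul_pow, mul_comm, zpow_mul, zpow_natCast]
  simp only [aeval_monomial, Finsupp.prod_fintype _ _ fun _ => pow_zero _, Fin.prod_univ_two,
    hpow, zpow_add₀ hz]
  ring

lemma aeval_mul_zpow_of_wt_eq (hz : z ≠ 0) (hF : ∀ m ∈ F.support, wt (e 0, e 1) m = D) :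
    aeval (fun i => ξ i * z ^ e i) F = z ^ D * aeval ξ F := by
  conv_lhs => rw [F.as_sum]
  conv_rhs => rw [F.as_sum]
  rw [map_sum, map_sum, Finset.mul_sum]
  refine Finset.sum_congr rfl fun m hm => ?_
  have hD : e 0 * m 0 + e 1 * m 1 = D := by exact_mod_cast (wt_intCast e m).symm.trans (hF m hm)
  rw [aeval_mul_zpow_monomial hz, hD]

variable [v.IsTrivialOn ℂ]

lemma valuation_aeval_mul_zpow_lt_of_wt_lt (hξ : ∀ i, v (ξ i) ≤ 1) (hz : 1 < v z)
    (hF : ∀ m ∈ F.support, wt (e 0, e 1) m < D) :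
    v (aeval (fun i => ξ i * z ^ e i) F) < v z ^ D := by
  have hz0 : z ≠ 0 := v.ne_zero_iff.1 (zero_lt_one.trans hz).ne'
  rw [F.as_sum, map_sum]
  refine v.map_sum_lt (zpow_ne_zero D (v.ne_zero_iff.2 hz0)) fun m hm => ?_
  have hD : e 0 * m 0 + e 1 * m 1 < D := by exact_mod_cast wt_intCast e m ▸ hF m hm
  rw [aeval_mul_zpow_monomial hz0, map_mul, map_zpow₀]
  exact (mul_le_of_le_one_right' (valuation_aeval_le_one v hξ _)).trans_lt
    (zpow_lt_zpow_right₀ hz hD)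

lemma valuation_aeval_initForm_lt_one (hξ : ∀ i, v (ξ i) ≤ 1) (hz : 1 < v z)
    (hD : dw (e 0, e 1) F = D) (hF : v (aeval (fun i => ξ i * z ^ e i) F) < v z ^ D) :
    v (aeval ξ (initForm (e 0, e 1) F)) < 1 := by
  have hz0 : z ≠ 0 := v.ne_zero_iff.1 (zero_lt_one.trans hz).ne'
  have hinit := aeval_mul_zpow_of_wt_eq (ξ := ξ) hz0 fun m hm =>
    (mem_support_initForm.1 hm).2.trans hD
  have hrest := valuation_aeval_mul_zpow_lt_of_wt_lt hξ hz fun m hm =>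
    (wt_lt_dw_of_mem_support_sub_initForm (w := (e 0, e 1)) (f := F) hm).trans_eq hD
  have hlt : v (z ^ D * aeval ξ (initForm (e 0, e 1) F)) < v z ^ D := by
    rw [← hinit, ← sub_sub_self F (initForm (e 0, e 1) F), map_sub]
    exact v.map_sub_lt hF hrest
  rw [map_mul, map_zpow₀] at hlt
  exact lt_of_not_ge fun hge => hlt.not_ge (le_mul_of_one_le_right' hge)

lemma exists_valuation_zpow_eq_of_aeval_eq_zero {x : Fin 2 → K} (hF : F ≠ 0)
    (hx : ∀ i, x i ≠ 0) (hFx : aeval x F = 0) (hpole : ∃ i, 1 < v (x i)) :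
    ∃ z : K, 1 < v z ∧ ∃ e : Fin 2 → ℤ, ∀ i, v (z ^ e i) = v (x i) := by
  obtain ⟨m, n, hmn, heq⟩ := exists_ne_valuation_prod_eq_of_aeval_eq_zero v hF hx hFx
  simp only [Finsupp.prod_fintype _ _ fun _ => pow_zero _, Fin.prod_univ_two] at heq
  have hv : ∀ i, v (x i) ≠ 0 := fun i => v.ne_zero_iff.2 (hx i)
  have hzpow : v (x 0) ^ ((m 0 : ℤ) - n 0) = v (x 1) ^ ((n 1 : ℤ) - m 1) := by
    rw [zpow_sub₀ (hv 0), zpow_sub₀ (hv 1),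
      div_eq_div_iff (zpow_ne_zero _ (hv 0)) (zpow_ne_zero _ (hv 1))]
    simpa only [zpow_natCast, mul_comm] using heq
  have hne : (m 0 : ℤ) - n 0 ≠ 0 ∨ (n 1 : ℤ) - m 1 ≠ 0 := by
    by_contra! hzero
    exact hmn (Finsupp.ext (Fin.forall_fin_two.2 ⟨by lia, by lia⟩))
  obtain ⟨z, hz, p, q, hp, hq⟩ := exists_zpow_valuation_eq v (hx 0) (hx 1)
    (Fin.exists_fin_two.1 hpole) hne hzpow
  exact ⟨z, hz, ![p, q], Fin.forall_fin_two.2 ⟨hp, hq⟩⟩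

lemma PairNondegAtInf.one_le_valuation_aeval (hgh : PairNondegAtInf g h) (hg : g ≠ 0)
    (hh : QuasiConvenient h) {x : Fin 2 → K} (hx : ∀ i, x i ≠ 0) (hgx : aeval x g = 0)
    (hpole : ∃ i, 1 < v (x i)) : 1 ≤ v (aeval x h) := by
  obtain ⟨z, hz, e, he⟩ := exists_valuation_zpow_eq_of_aeval_eq_zero hg hx hgx hpole
  have hz0 : z ≠ 0 := v.ne_zero_iff.1 (zero_lt_one.trans hz).ne'
  have hw : 0 < (e 0 : ℝ) ∨ 0 < (e 1 : ℝ) := by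
    rw [Int.cast_pos, Int.cast_pos, ← Fin.exists_fin_two (p := fun i => 0 < e i)]
    simpa only [← he, map_zpow₀, one_lt_zpow_iff_right₀ hz] using hpole
  set ξ : Fin 2 → K := fun i => x i / z ^ e i with hξ_def
  have hξ : ∀ i, v (ξ i) = 1 := fun i => by
    rw [hξ_def, map_div₀, he, div_self (v.ne_zero_iff.2 (hx i))]
  have hxξ : x = fun i => ξ i * z ^ e i :=
    funext fun i => (div_mul_cancel₀ _ (zpow_ne_zero _ hz0)).symm
  obtain ⟨Dg, hDg⟩ := exists_dw_eq_intCast e hg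
  obtain ⟨Dh, hDh⟩ := exists_dw_eq_intCast e hh.ne_zero
  by_contra! hlt
  have hg_init : v (aeval ξ (initForm (e 0, e 1) g)) < 1 :=
    valuation_aeval_initForm_lt_one (fun i => (hξ i).le) hz hDg <| by
      rw [← hxξ, hgx, map_zero]
      exact zpow_pos (zero_lt_one.trans hz) _
  have hh_init : v (aeval ξ (initForm (e 0, e 1) h)) < 1 :=
    valuation_aeval_initForm_lt_one (fun i => (hξ i).le) hz hDh <| by
      have hDh_nonneg : 0 ≤ Dh := by exact_mod_cast hDh ▸ hh.dw_nonneg hw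
      rw [← hxξ]
      exact hlt.trans_le (one_le_zpow₀ hz.le hDh_nonneg)
  have hprod := valuation_aeval_lt_one_of_mem_radical v (fun i => (hξ i).le)
    (by simpa using ⟨hg_init, hh_init⟩) (hgh.prod_X_mem_radical hw)
  simp only [map_prod, aeval_X, hξ, Finset.prod_const_one, lt_irrefl] at hprod

end ValuationAtInfinity

section Curve

lemma exists_generic_point.{u, u'} {σ : Type u} {k : Type u'} [Field k] {g : MvPolynomial σ k}
    (hg : Prime g) : ∃ (K : Type (max u u')) (_ : Field K) (_ : Algebra k K) (x : σ → K),
      ∀ F : MvPolynomial σ k, aeval x F = 0 ↔ g ∣ F := by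
  have : (Ideal.span {g}).IsPrime := (Ideal.span_singleton_prime hg.ne_zero).2 hg
  let Q := MvPolynomial σ k ⧸ Ideal.span {g}
  let φ : MvPolynomial σ k →ₐ[k] FractionRing Q :=
    (IsScalarTower.toAlgHom k Q _).comp (Ideal.Quotient.mkₐ k _)
  refine ⟨FractionRing Q, inferInstance, inferInstance, φ ∘ X, fun F => ?_⟩
  have hφ : φ F = algebraMap Q (FractionRing Q) (Ideal.Quotient.mk _ F) := rfl
  rw [← aeval_unique φ, hφ, FaithfulSMul.algebraMap_eq_zero_iff, Ideal.Quotient.eq_zero_iff_mem,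
    Ideal.mem_span_singleton]

lemma mem_range_algebraMap_of_isIntegral {k K : Type*} [Field k] [IsAlgClosed k]
    [Field K] [Algebra k K] {t : K} (ht : IsIntegral k t) : t ∈ (algebraMap k K).range :=
  minpoly.mem_range_of_degree_eq_one k t
    (IsAlgClosed.degree_eq_one_of_irreducible k (minpoly.irreducible ht))

variable {g h : P2}

lemma PairNondegAtInf.isIntegral_aeval (hgh : PairNondegAtInf g h) (hg : g ≠ 0)
    (hh : QuasiConvenient h) {K : Type*} [Field K] [Algebra ℂ K] {x : Fin 2 → K}
    (hx : ∀ i, x i ≠ 0) (hgx : aeval x g = 0) {B : P2} (hB : aeval x B * aeval x h = 1) :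
    IsIntegral ℂ (aeval x h) := by
  rw [eq_inv_of_mul_eq_one_right hB]
  by_contra hnot
  obtain ⟨V, _, hBV⟩ := exists_valuationSubring_of_not_isIntegral fun hint => hnot hint.inv
  have hpole : ∃ i, 1 < V.valuation (x i) := by
    by_contra! hle
    exact hBV.not_ge (valuation_aeval_le_one V.valuation hle B)
  have hVh := hgh.one_le_valuation_aeval hg hh hx hgx hpole
  rw [eq_inv_of_mul_eq_one_right hB, map_inv₀] at hVh
  exact hVh.not_gt (inv_lt_one_of_one_lt₀ hBV)

lemma PairNondegAtInf.exists_dvd_sub_C (hgh : PairNondegAtInf g h) (hg : Irreducible g)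
    (hqg : QuasiConvenient g) (hqh : QuasiConvenient h)
    (hzero : ∀ x, eval x g = 0 → eval x h ≠ 0) : ∃ c : ℂ, g ∣ h - C c := by
  have htop : Ideal.span {g, h} = ⊤ := ideal_eq_top_of_forall_exists_eval_ne_zero fun x => by
    by_cases hgx : eval x g = 0
    · exact ⟨h, Ideal.subset_span (by simp), hzero x hgx⟩
    · exact ⟨g, Ideal.subset_span (by simp), hgx⟩
  obtain ⟨A, B, hAB⟩ := Ideal.mem_span_pair.1 ((Ideal.eq_top_iff_one _).1 htop)
  obtain ⟨K, _, _, x, hx⟩ := exists_generic_point hg.prime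
  have hgx : aeval x g = 0 := (hx g).2 dvd_rfl
  have hx0 : ∀ i, x i ≠ 0 := fun i hi => by
    have hgX : g ∣ X i := (hx (X i)).1 (by rw [aeval_X, hi])
    exact quasiConvenient_iff_not_X_dvd.1 hqg i
      (hg.associated_of_dvd (X_prime (i := i)).irreducible hgX).dvd'
  have hunit : aeval x B * aeval x h = 1 := by
    rw [← map_mul, ← map_one (aeval (R := ℂ) x), ← hAB, map_add, map_mul (aeval x) A, hgx,
      mul_zero, zero_add]
  obtain ⟨c, hc⟩ := mem_range_algebraMap_of_isIntegral
    (hgh.isIntegral_aeval hg.ne_zero hqh hx0 hgx hunit)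
  exact ⟨c, (hx _).1 (by rw [map_sub, aeval_C, hc, sub_self])⟩

end Curve

section NewtonPolygon

variable {g : P2}

lemma wt_add_smul (w ν : ℝ × ℝ) (t : ℝ) (m : Fin 2 →₀ ℕ) :
    wt (w + t • ν) m = wt w m + t * wt ν m := by
  simp only [wt, Prod.fst_add, Prod.snd_add, Prod.smul_fst, Prod.smul_snd, smul_eq_mul]
  ring

lemma wt_neg (w : ℝ × ℝ) (m : Fin 2 →₀ ℕ) : wt (-w) m = -wt w m := by
  simp only [wt, Prod.fst_neg, Prod.snd_neg]
  ring

lemma exists_forall_add_mul_le {α 𝕜 : Type*} [Field 𝕜] [LinearOrder 𝕜] [IsStrictOrderedRing 𝕜]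
    {S : Finset α} {u u' : α → 𝕜} {M : 𝕜} (hu : ∀ k ∈ S, u k ≤ M) (hu' : ∃ k ∈ S, 0 < u' k) :
    ∃ t, (∀ k ∈ S, u k + t * u' k ≤ M) ∧ ∃ k ∈ S, 0 < u' k ∧ u k + t * u' k = M := by
  obtain ⟨k₀, hk₀, hmin⟩ := (S.filter (0 < u' ·)).exists_min_image (fun k => (M - u k) / u' k)
    (hu'.imp fun k hk => Finset.mem_filter.2 hk)
  obtain ⟨hk₀S, hk₀pos⟩ := Finset.mem_filter.1 hk₀
  refine ⟨(M - u k₀) / u' k₀, fun k hk => ?_, k₀, hk₀S, hk₀pos, ?_⟩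
  · rcases le_or_gt (u' k) 0 with hneg | hpos
    · have ht : 0 ≤ (M - u k₀) / u' k₀ := div_nonneg (sub_nonneg.2 (hu k₀ hk₀S)) hk₀pos.le
      linarith [hu k hk, mul_nonpos_of_nonneg_of_nonpos ht hneg]
    · have hk := hmin k (Finset.mem_filter.2 ⟨hk, hpos⟩)
      rw [le_div_iff₀ hpos] at hk
      linarith
  · rw [div_mul_cancel₀ _ hk₀pos.ne', add_sub_cancel]

lemma exists_wt_eq_zero_wt_pos {S : Finset (Fin 2 →₀ ℕ)}
    (hS : ∀ w : ℝ × ℝ, w ≠ 0 → ∃ k ∈ S, wt w k ≠ 0) {a : Fin 2 →₀ ℕ} (ha : a ≠ 0) :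
    ∃ ν : ℝ × ℝ, wt ν a = 0 ∧ ∃ k ∈ S, 0 < wt ν k := by
  let ν : ℝ × ℝ := (-(a 1 : ℝ), (a 0 : ℝ))
  have hν : ν ≠ 0 := fun h => ha <| by
    obtain ⟨h1, h0⟩ := Prod.ext_iff.1 h
    exact Finsupp.ext (Fin.forall_fin_two.2 ⟨by simpa [ν] using h0, by simpa [ν] using h1⟩)
  have hνa : wt ν a = 0 := by
    simp only [wt, ν]
    ring
  obtain ⟨k, hk, hνk⟩ := hS ν hν
  rcases hνk.lt_or_gt with hneg | hpos
  · exact ⟨-ν, by rw [wt_neg, hνa, neg_zero], k, hk, by rwa [wt_neg, neg_pos]⟩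
  · exact ⟨ν, hνa, k, hk, hpos⟩

lemma exists_dw_pos_support_initForm_nontrivial
    (hg : ∀ w : ℝ × ℝ, w ≠ 0 → ∃ k ∈ g.support, wt w k ≠ 0) :
    ∃ w, 0 < dw w g ∧ (initForm w g).support.Nontrivial := by
  obtain ⟨k, hk, hk0⟩ := hg (1, 1) (by simp)
  obtain ⟨a, ha, hwa⟩ := exists_wt_eq_dw (1, 1) (support_nonempty.1 ⟨k, hk⟩)
  have hpos : 0 < wt (1, 1) a := by
    have hk_nonneg : 0 ≤ wt (1, 1) k := by
      simp only [wt]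
      positivity
    exact (hk_nonneg.lt_of_ne' hk0).trans_le ((wt_le_dw hk).trans_eq hwa.symm)
  have ha0 : a ≠ 0 := by
    rintro rfl
    simp [wt] at hpos
  -- Tilt the line `wt (1, 1) = wt (1, 1) a` around `a` until it meets a second monomial.
  obtain ⟨ν, hνa, hν⟩ := exists_wt_eq_zero_wt_pos hg ha0
  obtain ⟨t, hle, b, hb, hνb, htb⟩ := exists_forall_add_mul_le
    (fun m hm => (wt_le_dw hm).trans_eq hwa.symm) hν
  simp only [← wt_add_smul] at hle htb
  have hta : wt ((1, 1) + t • ν) a = wt (1, 1) a := by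
    rw [wt_add_smul, hνa, mul_zero, add_zero]
  have hdw : dw ((1, 1) + t • ν) g = wt (1, 1) a :=
    IsGreatest.csSup_eq ⟨⟨a, ha, hta⟩, Set.forall_mem_image.2 hle⟩
  refine ⟨(1, 1) + t • ν, hdw ▸ hpos, a, mem_support_initForm.2 ⟨ha, hta.trans hdw.symm⟩, b,
    mem_support_initForm.2 ⟨hb, htb.trans hdw.symm⟩, ?_⟩
  rintro rfl
  exact hνb.ne' hνa

lemma PairNondegAtInf.exists_forall_wt_eq_zero {b c : ℂ} (hg : PairNondegAtInf g (C c + C b * g))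
    (hb : b ≠ 0) : ∃ w : ℝ × ℝ, w ≠ 0 ∧ ∀ m ∈ g.support, wt w m = 0 := by
  by_contra! hspan
  obtain ⟨w, hw, hnontrivial⟩ := exists_dw_pos_support_initForm_nontrivial hspan
  obtain ⟨x, hx, hgx⟩ := exists_torus_zero_of_support_nontrivial hnontrivial
  refine pairNondegAtInf_iff.1 hg w (pos_or_pos_of_dw_pos hw) x hx hgx ?_
  rw [initForm_C_add_C_mul hb c hw, map_mul, hgx, mul_zero]

lemma mul_nonpos_of_wt_eq_zero {w : ℝ × ℝ} {m : Fin 2 →₀ ℕ} (hm : m ≠ 0) (hwm : wt w m = 0) :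
    w.1 * w.2 ≤ 0 := by
  by_contra! hpos
  have hw1 : w.1 ≠ 0 := left_ne_zero_of_mul hpos.ne'
  have hw2 : w.2 ≠ 0 := right_ne_zero_of_mul hpos.ne'
  have hadd : w.1 * m 0 + w.2 * m 1 = 0 := hwm
  have hmul : 0 ≤ (w.1 * m 0) * (w.2 * m 1) := by
    rw [mul_mul_mul_comm]
    positivity
  have hsq : (w.1 * m 0) ^ 2 = -((w.1 * m 0) * (w.2 * m 1)) := by
    linear_combination (w.1 * m 0) * hadd
  have h0 : w.1 * m 0 = 0 := (sq_nonpos_iff _).1 (hsq.trans_le (neg_nonpos.2 hmul))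
  have h1 : w.2 * m 1 = 0 := by rwa [h0, zero_add] at hadd
  exact hm (Finsupp.ext (Fin.forall_fin_two.2
    ⟨by simpa [hw1] using h0, by simpa [hw2] using h1⟩))

end NewtonPolygon

section Factors

lemma totalDegree_pos_of_irreducible {σ k : Type*} [Field k] {F : MvPolynomial σ k}
    (hF : Irreducible F) : 0 < F.totalDegree := by
  rw [Nat.pos_iff_ne_zero, ne_eq, totalDegree_eq_zero_iff_eq_C]
  intro hC
  have hcoeff : coeff 0 F ≠ 0 := fun h0 => hF.ne_zero (by rw [hC, h0, C_0])
  exact hF.not_isUnit (hC ▸ (isUnit_iff_ne_zero.2 hcoeff).map C)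

lemma exists_irreducible_dvd {σ k : Type*} [Field k] {F : MvPolynomial σ k}
    (hF : 0 < F.totalDegree) : ∃ G, Irreducible G ∧ G ∣ F := by
  refine WfDvdMonoid.exists_irreducible_factor (fun hunit => ?_) fun hzero => ?_
  · obtain ⟨c, -, rfl⟩ := isUnit_iff_eq_C_of_isReduced.1 hunit
    exact hF.ne' (totalDegree_C c)
  · exact hF.ne' (hzero ▸ totalDegree_zero)

lemma eval_eq_zero_of_dvd {σ R : Type*} [CommSemiring R] {F G : MvPolynomial σ R} {x : σ → R}
    (hFG : F ∣ G) (hF : eval x F = 0) : eval x G = 0 :=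
  zero_dvd_iff.1 (hF ▸ map_dvd (eval x) hFG)

lemma exists_eq_C_add_C_mul_of_dvd_sub_C {σ k : Type*} [Field k] {g h : MvPolynomial σ k}
    {c d : k} (hg : 0 < g.totalDegree) (hh : 0 < h.totalDegree) (hgh : g ∣ h - C c)
    (hhg : h ∣ g - C d) : ∃ b : k, b ≠ 0 ∧ h = C c + C b * g := by
  have sub_C_ne_zero : ∀ {F : MvPolynomial σ k} (a : k), 0 < F.totalDegree → F - C a ≠ 0 :=
    fun a hF h0 => hF.ne' (by rw [sub_eq_zero.1 h0, totalDegree_C])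
  have hdeg : h.totalDegree ≤ g.totalDegree :=
    (totalDegree_le_of_dvd_of_isDomain hhg (sub_C_ne_zero d hg)).trans (totalDegree_sub_C_le g d)
  obtain ⟨k, hk⟩ := hgh
  have hgk : g * k ≠ 0 := hk ▸ sub_C_ne_zero c hh
  have hk_deg : k.totalDegree = 0 := by
    have hle := totalDegree_sub_C_le h c
    rw [hk, totalDegree_mul_of_isDomain (left_ne_zero_of_mul hgk) (right_ne_zero_of_mul hgk)]
      at hle
    lia
  rw [totalDegree_eq_zero_iff_eq_C] at hk_deg
  refine ⟨coeff 0 k, fun h0 => right_ne_zero_of_mul hgk (by rw [hk_deg, h0, C_0]), ?_⟩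
  rw [← hk_deg, mul_comm, ← hk, add_sub_cancel]

variable {f g h : P2}

lemma PairNondegAtInf.exists_forall_wt_eq_zero_of_no_common_zero (hgh : PairNondegAtInf g h)
    (hg : Irreducible g) (hh : Irreducible h) (hqg : QuasiConvenient g) (hqh : QuasiConvenient h)
    (hzero : ∀ x, eval x g = 0 → eval x h ≠ 0) :
    ∃ w : ℝ × ℝ, w ≠ 0 ∧ ∀ m ∈ g.support, wt w m = 0 := by
  obtain ⟨c, hc⟩ := hgh.exists_dvd_sub_C hg hqg hqh hzero
  obtain ⟨d, hd⟩ := hgh.symm.exists_dvd_sub_C hh hqh hqg fun x hhx hgx => hzero x hgx hhx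
  obtain ⟨b, hb, rfl⟩ := exists_eq_C_add_C_mul_of_dvd_sub_C (totalDegree_pos_of_irreducible hg)
    (totalDegree_pos_of_irreducible hh) hc hd
  exact hgh.exists_forall_wt_eq_zero hb

lemma exists_opposite_initForm_zero_of_wt_eq_zero (hqg : QuasiConvenient g)
    (hdeg : 0 < g.totalDegree) (hgf : g ∣ f) {w : ℝ × ℝ} (hw : ∀ m ∈ g.support, wt w m = 0) :
    w.1 * w.2 ≤ 0 ∧ ∃ x y : ℂ, x ≠ 0 ∧ y ≠ 0 ∧
      eval ![x, y] (initForm w f) = 0 ∧ eval ![x, y] (initForm (-w) f) = 0 := by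
  obtain ⟨m, hm, hm0⟩ := exists_mem_support_ne_zero hdeg
  refine ⟨mul_nonpos_of_wt_eq_zero hm0 (hw m hm), (exists_fin_two_forall_ne_zero_and_iff
    (P := fun x => eval x (initForm w f) = 0 ∧ eval x (initForm (-w) f) = 0)).1 ?_⟩
  obtain ⟨x, hx, hgx⟩ := exists_torus_zero_of_support_nontrivial (hqg.support_nontrivial hdeg)
  have hinit : initForm w g = g := initForm_eq_self hw
  have hinit_neg : initForm (-w) g = g := initForm_eq_self fun m hm => by
    rw [wt_neg, hw m hm]
  exact ⟨x, hx, eval_initForm_eq_zero_of_dvd hgf (by rwa [hinit]),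
    eval_initForm_eq_zero_of_dvd hgf (by rwa [hinit_neg])⟩

lemma exists_common_zero_or_exists_wt_eq_zero (hf : QuasiConvenient f) (hnd : NondegAtInf f)
    (hg : Irreducible g) (hh : Irreducible h) (hgf : g ∣ f) (hhf : h ∣ f) :
    (∃ x, eval x g = 0 ∧ eval x h = 0) ∨
      ∃ w : ℝ × ℝ, w ≠ 0 ∧ ∀ m ∈ g.support, wt w m = 0 := by
  by_cases hhg : h ∣ g
  · left
    obtain ⟨x, -, hhx⟩ := exists_torus_zero_of_support_nontrivial
      ((hf.of_dvd hhf).support_nontrivial (totalDegree_pos_of_irreducible hh))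
    exact ⟨x, eval_eq_zero_of_dvd hhg hhx, hhx⟩
  · rw [or_iff_not_imp_left]
    intro hzero
    have hghf : g * h ∣ f := by
      obtain ⟨k, rfl⟩ := hgf
      exact mul_dvd_mul_left g ((hh.prime.dvd_or_dvd hhf).resolve_left hhg)
    exact (hnd.pairNondegAtInf hghf).exists_forall_wt_eq_zero_of_no_common_zero hg hh
      (hf.of_dvd hgf) (hf.of_dvd hhf) fun x hgx hhx => hzero ⟨x, hgx, hhx⟩

end Factors

/-- Main theorem: criterion of near irreducibility. -/
theorem stmt11 (f : P2) (hd : 0 < f.totalDegree) (hqc : QuasiConvenient f)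
    (hnd : NondegAtInf f)
    (h2 : ∀ w : ℝ × ℝ, w ≠ 0 → w.1 * w.2 ≤ 0 →
      ¬ ∃ x y : ℂ, x ≠ 0 ∧ y ≠ 0 ∧
        eval ![x, y] (initForm w f) = 0 ∧ eval ![x, y] (initForm (-w) f) = 0) :
    NearlyIrreducible f := by
  refine ⟨hd, fun G H hGf hHf hGdeg hHdeg => ?_⟩
  obtain ⟨g, hg, hgG⟩ := exists_irreducible_dvd hGdeg
  obtain ⟨h, hh, hhH⟩ := exists_irreducible_dvd hHdeg
  have hgf := hgG.trans hGf
  obtain ⟨x, hgx, hhx⟩ | ⟨w, hw, hgw⟩ :=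
    exists_common_zero_or_exists_wt_eq_zero hqc hnd hg hh hgf (hhH.trans hHf)
  · have hx : ![x 0, x 1] = x := List.ofFn_inj.1 rfl
    refine ⟨x 0, x 1, ?_, ?_⟩ <;> rw [hx]
    exacts [eval_eq_zero_of_dvd hgG hgx, eval_eq_zero_of_dvd hhH hhx]
  · obtain ⟨hw_nonpos, hzero⟩ := exists_opposite_initForm_zero_of_wt_eq_zero (hqc.of_dvd hgf)
      (totalDegree_pos_of_irreducible hg) hgf hgw
    exact absurd hzero (h2 w hw hw_nonpos)
end
end
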